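/- arXiv:1905.03526 — 4 statements merged into one kernel-verified Lean document; each statement's English description precedes it below -/
import Mathlib

section
/- Let T > 0 and α ∈ ℝ. Let F : [0,T] → ℝ be continuous with F(0) < α, suppose the set {t ∈ [0,T] : F(t) ≥ α} is nonempty, and let τ = inf{t ∈ [0,T] : F(t) ≥ α} with τ < T. Assume F is differentiable at τ with F'(τ) > 0. Let (F_ρ)_{ρ≠0} be a family of continuous functions on [0,T] such that sup_{t∈[0,T]} |F_ρ(t) − F(t)| → 0 as ρ → 0. Define τ_ρ := inf({t ∈ [0,T] : F_ρ(t) ≥ α} ∪ {T}). Then τ_ρ → τ as ρ → 0. -/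
open Set Filter

/-!
The level set `{t ∈ [0, T] | α ≤ F t}` has `τ` as its infimum, so `F < α` on `[0, c]` for each
`c < τ`. By compactness `F` stays away from `α` there, hence so does every uniformly close
perturbation, which therefore cannot terminate before `c`. Conversely, `F` exceeds `α` strictly at
times arbitrarily close to the right of `τ` (because `F τ ≥ α` and `F' τ > 0`), and a perturbation
close to `F` at such a time has already terminated.
-/

open scoped Topology

section TerminalTime

variable {ι β : Type*} [ConditionallyCompleteLinearOrder ι] [LinearOrder β]
  {a b c t : ι} {α : β} {f : ι → β}

/-- The varying terminal time of `f` on `[a, b]`: the infimum of the times at which `f` is at least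
`α`, capped at the horizon `b`. Adjoining `b` to the set of times gives the value `b` when the
level `α` is never reached. -/
noncomputable def terminalTime (a b : ι) (α : β) (f : ι → β) : ι :=
  sInf ({t ∈ Icc a b | α ≤ f t} ∪ {b})

lemma bddBelow_superlevel_Icc : BddBelow {t ∈ Icc a b | α ≤ f t} :=
  bddBelow_Icc.mono (sep_subset _ _)

lemma bddBelow_superlevel_Icc_union : BddBelow ({t ∈ Icc a b | α ≤ f t} ∪ {b}) :=
  bddBelow_superlevel_Icc.union bddBelow_singleton

lemma terminalTime_le_right : terminalTime a b α f ≤ b :=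
  csInf_le bddBelow_superlevel_Icc_union (mem_union_right _ rfl)

lemma terminalTime_le (ht : t ∈ Icc a b) (hα : α ≤ f t) : terminalTime a b α f ≤ t :=
  csInf_le bddBelow_superlevel_Icc_union (mem_union_left _ ⟨ht, hα⟩)

lemma apply_lt_of_lt_terminalTime (hat : a ≤ t) (ht : t < terminalTime a b α f) : f t < α := by
  contrapose! ht
  exact (le_total t b).elim (fun htb => terminalTime_le ⟨hat, htb⟩ ht) terminalTime_le_right.trans

lemma le_terminalTime (hcb : c ≤ b) (h : ∀ t ∈ Icc a c, f t < α) : c ≤ terminalTime a b α f := by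
  refine le_csInf ⟨b, mem_union_right _ rfl⟩ ?_
  rintro t (⟨⟨hat, -⟩, hα⟩ | rfl)
  · by_contra! htc
    exact (h t ⟨hat, htc.le⟩).not_ge hα
  · exact hcb

lemma terminalTime_eq_sInf (hne : {t ∈ Icc a b | α ≤ f t}.Nonempty) :
    terminalTime a b α f = sInf {t ∈ Icc a b | α ≤ f t} := by
  obtain ⟨t, ht⟩ := hne
  rw [terminalTime, csInf_union bddBelow_superlevel_Icc ⟨t, ht⟩ bddBelow_singleton
    (singleton_nonempty b), csInf_singleton]
  exact inf_eq_left.2 ((csInf_le bddBelow_superlevel_Icc ht).trans ht.1.2)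

lemma superlevel_Icc_nonempty_of_terminalTime_lt (hlt : terminalTime a b α f < b) :
    {t ∈ Icc a b | α ≤ f t}.Nonempty := by
  contrapose! hlt
  rw [terminalTime, hlt, empty_union, csInf_singleton]

lemma left_le_terminalTime (hlt : terminalTime a b α f < b) : a ≤ terminalTime a b α f := by
  have hne := superlevel_Icc_nonempty_of_terminalTime_lt hlt
  rw [terminalTime_eq_sInf hne]
  exact le_csInf hne fun t ht => ht.1.1

lemma le_apply_terminalTime [TopologicalSpace ι] [OrderTopology ι]
    (hf : UpperSemicontinuousOn f (Icc a b)) (hlt : terminalTime a b α f < b) :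
    α ≤ f (terminalTime a b α f) := by
  have hclosed : IsClosed {t ∈ Icc a b | α ≤ f t} := by
    obtain ⟨v, hv, hlevel⟩ := upperSemicontinuousOn_iff_preimage_Ici.1 hf α
    change IsClosed (Icc a b ∩ f ⁻¹' Ici α)
    rw [hlevel]
    exact isClosed_Icc.inter hv
  have hne := superlevel_Icc_nonempty_of_terminalTime_lt hlt
  rw [terminalTime_eq_sInf hne]
  exact (hclosed.csInf_mem hne bddBelow_superlevel_Icc).2

end TerminalTime

lemma eventually_forall_lt_of_tendstoUniformlyOn_of_isCompact {X β P : Type*} [TopologicalSpace X]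
    [UniformSpace β] [AddGroup β] [IsUniformAddGroup β] [LinearOrder β] [OrderTopology β]
    [AddLeftMono β] [AddRightMono β] {l : Filter P} {G : P → X → β} {f : X → β} {K : Set X} {α : β}
    (hK : IsCompact K) (hf : UpperSemicontinuousOn f K) (hlt : ∀ x ∈ K, f x < α)
    (hG : TendstoUniformlyOn G f l K) :
    ∀ᶠ ρ in l, ∀ x ∈ K, G ρ x < α := by
  obtain rfl | hne := K.eq_empty_or_nonempty
  · simp
  · obtain ⟨m, hm, hmax⟩ := hf.exists_isMaxOn hne hK
    exact hG.eventually_forall_lt (hlt m hm) hmax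

lemma eventually_nhdsGT_lt_of_hasDerivWithinAt_pos {𝕜 : Type*} [NontriviallyNormedField 𝕜]
    [LinearOrder 𝕜] [IsStrictOrderedRing 𝕜] [OrderTopology 𝕜] {f : 𝕜 → 𝕜} {d x : 𝕜}
    (hf : HasDerivWithinAt f d (Ioi x) x) (hd : 0 < d) : ∀ᶠ t in 𝓝[>] x, f x < f t := by
  have hslope : ∀ᶠ t in 𝓝[>] x, 0 < slope f x t :=
    ((hasDerivWithinAt_iff_tendsto_slope' self_notMem_Ioi).1 hf).eventually_const_lt hd
  filter_upwards [hslope, self_mem_nhdsWithin] with t ht hxt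
  exact (slope_pos_iff hxt).1 ht

section Convergence

variable {ι β P : Type*} [ConditionallyCompleteLinearOrder ι] [TopologicalSpace ι]
  [OrderTopology ι] [LinearOrder β] {a b c : ι} {α : β} {l : Filter P} {f : ι → β} {G : P → ι → β}

lemma eventually_lt_terminalTime [DenselyOrdered ι] [UniformSpace β] [AddGroup β]
    [IsUniformAddGroup β] [OrderTopology β] [AddLeftMono β] [AddRightMono β]
    (hf : UpperSemicontinuousOn f (Icc a b)) (hG : TendstoUniformlyOn G f l (Icc a b))
    (hc : c < terminalTime a b α f) : ∀ᶠ ρ in l, c < terminalTime a b α (G ρ) := by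
  obtain ⟨c', hcc', hc'⟩ := exists_between hc
  have hc'b : c' ≤ b := hc'.le.trans terminalTime_le_right
  have hsub : Icc a c' ⊆ Icc a b := Icc_subset_Icc_right hc'b
  have hbelow : ∀ t ∈ Icc a c', f t < α := fun t ht =>
    apply_lt_of_lt_terminalTime ht.1 (ht.2.trans_lt hc')
  filter_upwards [eventually_forall_lt_of_tendstoUniformlyOn_of_isCompact isCompact_Icc
    (hf.mono hsub) hbelow (hG.mono hsub)] with ρ hρ
  exact hcc'.trans_le (le_terminalTime hc'b hρ)

lemma eventually_terminalTime_lt [TopologicalSpace β] [OrderTopology β]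
    (hG : ∀ t ∈ Icc a b, Tendsto (G · t) l (𝓝 (f t)))
    (hcross : terminalTime a b α f < b → ∃ᶠ t in 𝓝[>] terminalTime a b α f, α < f t)
    (hc : terminalTime a b α f < c) : ∀ᶠ ρ in l, terminalTime a b α (G ρ) < c := by
  obtain hlt | heq := (terminalTime_le_right : terminalTime a b α f ≤ b).lt_or_eq
  · obtain ⟨t, hαt, hτt, htc⟩ :=
      ((hcross hlt).and_eventually (Ioo_mem_nhdsGT (lt_min hc hlt))).exists
    have ht : t ∈ Icc a b :=
      ⟨(left_le_terminalTime hlt).trans hτt.le, (htc.trans_le (min_le_right c b)).le⟩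
    filter_upwards [(hG t ht).eventually_const_lt hαt] with ρ hρ
    exact (terminalTime_le ht hρ.le).trans_lt (htc.trans_le (min_le_left c b))
  · exact .of_forall fun ρ => terminalTime_le_right.trans_lt (heq ▸ hc)

theorem terminal_time_continuity_interior_general [DenselyOrdered ι] [UniformSpace β] [AddGroup β]
    [IsUniformAddGroup β] [OrderTopology β] [AddLeftMono β] [AddRightMono β]
    (hf : UpperSemicontinuousOn f (Icc a b)) (hG : TendstoUniformlyOn G f l (Icc a b))
    (hcross : terminalTime a b α f < b → ∃ᶠ t in 𝓝[>] terminalTime a b α f, α < f t) :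
    Tendsto (fun ρ => terminalTime a b α (G ρ)) l (𝓝 (terminalTime a b α f)) :=
  tendsto_order.2 ⟨fun _ hc => eventually_lt_terminalTime hf hG hc,
    fun _ hc => eventually_terminalTime_lt (fun _ ht => hG.tendsto_at ht) hcross hc⟩

end Convergence

/-- Lemma 3.1(i) (deterministic content): continuity of the varying terminal
time under uniform perturbations, when `τ < T` and `F` has positive derivative
at `τ`. -/
theorem terminal_time_continuity_interior
    (T α : ℝ) (hT : 0 < T) (F : ℝ → ℝ)
    (hF : ContinuousOn F (Set.Icc 0 T))
    (h0 : F 0 < α)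
    (hne : {t ∈ Set.Icc 0 T | α ≤ F t}.Nonempty)
    (τ : ℝ) (hτ : τ = sInf {t ∈ Set.Icc 0 T | α ≤ F t})
    (hτT : τ < T)
    (d : ℝ) (hd : HasDerivAt F d τ) (hdpos : 0 < d)
    (Fρ : ℝ → ℝ → ℝ)
    (hFρcont : ∀ ρ : ℝ, ρ ≠ 0 → ContinuousOn (Fρ ρ) (Set.Icc 0 T))
    (hconv : TendstoUniformlyOn Fρ F (nhdsWithin 0 {(0 : ℝ)}ᶜ) (Set.Icc 0 T)) :
    Tendsto (fun ρ : ℝ => sInf ({t ∈ Set.Icc 0 T | α ≤ Fρ ρ t} ∪ {T}))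
      (nhdsWithin 0 {(0 : ℝ)}ᶜ) (nhds τ) := by
  obtain rfl := hτ.trans (terminalTime_eq_sInf hne).symm
  exact terminal_time_continuity_interior_general hF.upperSemicontinuousOn hconv fun hlt =>
    (eventually_nhdsGT_lt_of_hasDerivWithinAt_pos hd.hasDerivWithinAt hdpos).frequently.mono
      fun _ => (le_apply_terminalTime hF.upperSemicontinuousOn hlt).trans_lt
end

section
/- Let T > 0 and α ∈ ℝ. Let F : [0,T] → ℝ be continuous with F(t) < α for every t ∈ [0,T). Let (F_ρ)_{ρ≠0} be a family of continuous functions on [0,T] such that sup_{t∈[0,T]} |F_ρ(t) − F(t)| → 0 as ρ → 0. Define τ_ρ := inf({t ∈ [0,T] : F_ρ(t) ≥ α} ∪ {T}). Then τ_ρ → T as ρ → 0. -/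
open Set Filter

/-!
The hitting times never exceed `T`, so only lower bounds matter. For `s < T` the limit `F` attains
its maximum on `[0, s]`, and this maximum is below `α`; by uniform convergence the perturbed
functions stay below `α` on `[0, s]` as well, so their hitting times are eventually at least `s`.
-/

section HittingTimes

open MeasureTheory Topology

variable {X E Ω : Type*} [ConditionallyCompleteLinearOrder X] {a b : X}

theorem sInf_union_singleton_eq_hittingBtwn (u : X → Ω → E) (S : Set E) (a b : X) (ω : Ω) :
    sInf ({t ∈ Icc a b | u t ω ∈ S} ∪ {b}) = hittingBtwn u S a b ω := by
  unfold hittingBtwn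
  split_ifs with hhit
  · obtain ⟨t, ht, htS⟩ := hhit
    have hbdd : BddBelow {t ∈ Icc a b | u t ω ∈ S} := bddBelow_Icc.mono (sep_subset _ _)
    have hle : sInf {t ∈ Icc a b | u t ω ∈ S} ≤ b := (csInf_le hbdd ⟨ht, htS⟩).trans ht.2
    rw [csInf_union hbdd ⟨t, ht, htS⟩ bddBelow_singleton (singleton_nonempty b), csInf_singleton,
      inf_eq_left.2 hle]
    rfl
  · have hempty : {t ∈ Icc a b | u t ω ∈ S} = ∅ :=
      eq_empty_of_forall_notMem fun t ht => hhit ⟨t, ht⟩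
    rw [hempty, empty_union, csInf_singleton]

variable [TopologicalSpace X] [OrderTopology X] [DenselyOrdered X] {l : Filter Ω}

theorem tendsto_hittingBtwn_of_eventually_notMem {u : X → Ω → E} {S : Set E}
    (hu : ∀ s < b, ∀ᶠ ω in l, ∀ t ∈ Ico a s, u t ω ∉ S) :
    Tendsto (hittingBtwn u S a b) l (𝓝 b) := by
  refine tendsto_order.2 ⟨fun c hcb => ?_, fun c hbc => ?_⟩
  · obtain ⟨s, hcs, hsb⟩ := exists_between hcb
    filter_upwards [hu s hsb] with ω hω
    have hsτ : s ≤ hittingBtwn u S a b ω := by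
      by_contra! hτs
      obtain ⟨t, ht, htS⟩ := (hittingBtwn_lt_iff s hsb.le).1 hτs
      exact hω t ht htS
    exact hcs.trans_le hsτ
  · exact .of_forall fun ω => (hittingBtwn_le ω).trans_lt hbc

end HittingTimes

section UniformConvergence

open Topology

variable {X Y E ι : Type*} [AddGroup E] [LinearOrder E] [AddLeftMono E] [AddRightMono E]
  [UniformSpace E] [IsUniformAddGroup E] [OrderTopology E] {l : Filter ι} {α : E}

theorem eventually_forall_lt_of_tendstoLocallyUniformlyOn [TopologicalSpace Y] {f : ι → Y → E}
    {F : Y → E} {K : Set Y} (hK : IsCompact K) (hF : UpperSemicontinuousOn F K)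
    (hlt : ∀ y ∈ K, F y < α) (hf : TendstoLocallyUniformlyOn f F l K) :
    ∀ᶠ i in l, ∀ y ∈ K, f i y < α := by
  rcases K.eq_empty_or_nonempty with rfl | hne
  · simp
  · obtain ⟨y, hy, hmax⟩ := hF.exists_isMaxOn hne hK
    have hunif : TendstoUniformlyOn f F l K :=
      (tendstoLocallyUniformlyOn_iff_tendstoUniformlyOn_of_compact hK).1 hf
    exact hunif.eventually_forall_lt (hlt y hy) hmax

theorem terminal_time_continuity_boundary_general [ConditionallyCompleteLinearOrder X]
    [TopologicalSpace X] [OrderTopology X] [DenselyOrdered X] {a b : X} {f : ι → X → E} {F : X → E}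
    (hF : UpperSemicontinuousOn F (Ico a b)) (hlt : ∀ t ∈ Ico a b, F t < α)
    (hf : TendstoLocallyUniformlyOn f F l (Ico a b)) :
    Tendsto (fun i => sInf ({t ∈ Icc a b | α ≤ f i t} ∪ {b})) l (𝓝 b) := by
  have hsInf (i : ι) := sInf_union_singleton_eq_hittingBtwn (fun t i => f i t) (Ici α) a b i
  refine (tendsto_hittingBtwn_of_eventually_notMem fun s hsb => ?_).congr fun i => (hsInf i).symm
  have hsub : Icc a s ⊆ Ico a b := Icc_subset_Ico_right hsb
  have hlt_Icc : ∀ᶠ i in l, ∀ t ∈ Icc a s, f i t < α :=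
    eventually_forall_lt_of_tendstoLocallyUniformlyOn isCompact_Icc (hF.mono hsub)
      (fun t ht => hlt t (hsub ht)) (hf.mono hsub)
  filter_upwards [hlt_Icc] with i hi t ht
  exact (hi t (Ico_subset_Icc_self ht)).not_ge

end UniformConvergence

/-- Lemma 3.1(ii) (deterministic content): when the constraint level is
reached only at the terminal time `T` (i.e. `F < α` on `[0,T)`), the perturbed
terminal times converge to `T`. -/
theorem terminal_time_continuity_boundary
    (T α : ℝ) (hT : 0 < T) (F : ℝ → ℝ)
    (hF : ContinuousOn F (Set.Icc 0 T))
    (hlt : ∀ t ∈ Set.Ico 0 T, F t < α)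
    (Fρ : ℝ → ℝ → ℝ)
    (hFρcont : ∀ ρ : ℝ, ρ ≠ 0 → ContinuousOn (Fρ ρ) (Set.Icc 0 T))
    (hconv : TendstoUniformlyOn Fρ F (nhdsWithin 0 {(0 : ℝ)}ᶜ) (Set.Icc 0 T)) :
    Tendsto (fun ρ : ℝ => sInf ({t ∈ Set.Icc 0 T | α ≤ Fρ ρ t} ∪ {T}))
      (nhdsWithin 0 {(0 : ℝ)}ᶜ) (nhds T) :=
  terminal_time_continuity_boundary_general (hF.mono Ico_subset_Icc_self).upperSemicontinuousOn hlt
    (hconv.mono Ico_subset_Icc_self).tendstoLocallyUniformlyOn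
end

section
/- Let T > 0, α, c ∈ ℝ, and let h : [0,T] → ℝ and g : [0,T] → ℝ be integrable, with h continuous at a point τ ∈ (0,T) and h(τ) ≠ 0. Let (h_ρ)_{ρ≠0} be a family of integrable functions on [0,T] such that (h_ρ − h)/ρ converges to g uniformly on [0,T] as ρ → 0. Set F(s) = c + ∫₀ˢ h(t) dt and F_ρ(s) = c + ∫₀ˢ h_ρ(t) dt. Suppose F(τ) = α, and suppose (τ_ρ)_{ρ≠0} ⊆ [0,T] satisfies τ_ρ → τ as ρ → 0 and F_ρ(τ_ρ) = α for all ρ ≠ 0 sufficiently close to 0. Then (τ − τ_ρ)/ρ → (1/h(τ)) ∫₀^τ g(t) dt as ρ → 0. -/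
open Set Filter MeasureTheory intervalIntegral

/-!
If `F` has derivative `F' ≠ 0` at `x`, then `F x - F (y i)` and `(x - y i) * F'` are asymptotically
equivalent as `y i → x`. When `Φ i (y i) = F x`, the former equals `Φ i (y i) - F (y i)`, the
perturbation of `F` at the moving point, so if `w i * (Φ i - F)` converges uniformly to `G`, then
`w i * (x - y i)` tends to `G x / F'`. This is applied to the primitives of `h`, `h_ρ` and `g`, with
`w = 1 / ρ`, since uniform convergence on a bounded interval passes to primitives. Asymptotic
equivalence, unlike a difference quotient, needs no separate treatment of indices with `y i = x`.
-/

open scoped Topology Asymptotics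

lemma tendsto_mul_sub_of_apply_eq {ι 𝕜 : Type*} [NontriviallyNormedField 𝕜] {l : Filter ι}
    {F G : 𝕜 → 𝕜} {F' x : 𝕜} {s : Set 𝕜} {Φ : ι → 𝕜 → 𝕜} {w y : ι → 𝕜}
    (hF : HasDerivWithinAt F F' s x) (hF' : F' ≠ 0)
    (hΦ : TendstoUniformlyOn (fun i z ↦ w i * (Φ i z - F z)) G l s)
    (hG : ContinuousWithinAt G s x) (hy : Tendsto y l (𝓝[s] x))
    (hlevel : ∀ᶠ i in l, Φ i (y i) = F x) :
    Tendsto (fun i ↦ w i * (x - y i)) l (𝓝 (G x / F')) := by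
  have hperturb : Tendsto (fun i ↦ w i * (F x - F (y i))) l (𝓝 (G x)) :=
    (hΦ.tendsto_comp hG hy).congr' (hlevel.mono fun i hi ↦ by rw [hi])
  have hincr : (fun i ↦ F x - F (y i)) ~[l] fun i ↦ (x - y i) * F' := by
    simpa [Function.comp_def, Pi.neg_def, ← neg_mul] using
      ((hF.isEquivalent_sub hF').comp_tendsto (hy.prodMk (tendsto_const_pure (b := x)))).neg
  have hscaled : Tendsto (fun i ↦ w i * ((x - y i) * F')) l (𝓝 (G x)) :=
    (Asymptotics.IsEquivalent.refl.mul hincr).tendsto_nhds hperturb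
  refine (hscaled.div_const F').congr fun i ↦ ?_
  rw [← mul_assoc, mul_div_cancel_right₀ _ hF']

section Primitive

variable {E : Type*} [NormedAddCommGroup E] [NormedSpace ℝ E] {a b : ℝ}

lemma tendstoUniformlyOn_primitive {ι : Type*} {l : Filter ι} {k : ι → ℝ → E} {g : ℝ → E}
    (hk : ∀ᶠ i in l, IntervalIntegrable (k i) volume a b) (hg : IntervalIntegrable g volume a b)
    (hconv : TendstoUniformlyOn k g l (uIcc a b)) :
    TendstoUniformlyOn (fun i s ↦ ∫ t in a..s, k i t) (fun s ↦ ∫ t in a..s, g t) l (uIcc a b) := by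
  rw [Metric.tendstoUniformlyOn_iff] at hconv ⊢
  intro ε hε
  filter_upwards [hk, hconv (ε / (|b - a| + 1)) (by positivity)] with i hki hclose s hs
  have hsub : uIcc a s ⊆ uIcc a b := uIcc_subset_uIcc_left hs
  calc dist (∫ t in a..s, g t) (∫ t in a..s, k i t)
      = ‖∫ t in a..s, (g t - k i t)‖ := by
        rw [dist_eq_norm, integral_sub (hg.mono_set hsub) (hki.mono_set hsub)]
    _ ≤ ε / (|b - a| + 1) * |s - a| :=
        norm_integral_le_of_norm_le_const fun t ht ↦ by
          simpa only [dist_eq_norm] using (hclose t (hsub (uIoc_subset_uIcc ht))).le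
    _ ≤ ε / (|b - a| + 1) * |b - a| := by gcongr 1; exact abs_sub_left_of_mem_uIcc hs
    _ < ε := by
        rw [div_mul_eq_mul_div, div_lt_iff₀ (by positivity)]
        gcongr
        exact lt_add_one _

lemma hasDerivWithinAt_primitive_uIcc [CompleteSpace E] {h : ℝ → E} {τ : ℝ}
    (hint : IntervalIntegrable h volume a b) (hτ : τ ∈ uIcc a b)
    (hcont : ContinuousWithinAt h (uIcc a b) τ) :
    HasDerivWithinAt (fun s ↦ ∫ t in a..s, h t) (h τ) (uIcc a b) τ := by
  have : Fact (τ ∈ uIcc a b) := ⟨hτ⟩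
  exact integral_hasDerivWithinAt_right (hint.mono_set (uIcc_subset_uIcc_left hτ))
    ⟨uIcc a b, self_mem_nhdsWithin, ((intervalIntegrable_iff').1 hint).aestronglyMeasurable⟩ hcont

end Primitive

/-- The factor `w i` plays the role of `1 / ρ`, and `l` that of `ρ → 0`; one-sided limits and
sequences of perturbations are other instances. -/
theorem terminal_time_first_variation_general {ι : Type*} {l : Filter ι} {a b τ : ℝ} {h g : ℝ → ℝ}
    {hρ : ι → ℝ → ℝ} {w τρ : ι → ℝ} (hint : IntervalIntegrable h volume a b)
    (gint : IntervalIntegrable g volume a b) (hτ : τ ∈ uIcc a b)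
    (hcont : ContinuousWithinAt h (uIcc a b) τ) (hne : h τ ≠ 0)
    (hρint : ∀ᶠ i in l, IntervalIntegrable (hρ i) volume a b)
    (hconv : TendstoUniformlyOn (fun i t ↦ w i * (hρ i t - h t)) g l (uIcc a b))
    (hτρ : Tendsto τρ l (𝓝[uIcc a b] τ))
    (hlevel : ∀ᶠ i in l, ∫ t in a..τρ i, hρ i t = ∫ t in a..τ, h t) :
    Tendsto (fun i ↦ w i * (τ - τρ i)) l (𝓝 ((∫ t in a..τ, g t) / h τ)) := by
  have hprim : TendstoUniformlyOn
      (fun i s ↦ w i * ((∫ t in a..s, hρ i t) - ∫ t in a..s, h t)) (fun s ↦ ∫ t in a..s, g t) l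
      (uIcc a b) := by
    refine (tendstoUniformlyOn_primitive (hρint.mono fun i hi ↦ (hi.sub hint).const_mul (w i))
      gint hconv).congr (hρint.mono fun i hi s hs ↦ ?_)
    have hsub : uIcc a s ⊆ uIcc a b := uIcc_subset_uIcc_left hs
    simp only [intervalIntegral.integral_const_mul,
      integral_sub (hi.mono_set hsub) (hint.mono_set hsub)]
  exact tendsto_mul_sub_of_apply_eq (hasDerivWithinAt_primitive_uIcc hint hτ hcont) hne hprim
    (continuousOn_primitive_interval' gint left_mem_uIcc τ hτ) hτρ hlevel

/-- Lemma 3.3(i) (deterministic content): the first-order variation of the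
varying terminal time.  With `F s = c + ∫₀ˢ h` and `F_ρ s = c + ∫₀ˢ h_ρ`,
where `(h_ρ - h)/ρ → g` uniformly, `F τ = α`, `τ_ρ → τ` and `F_ρ (τ_ρ) = α`
eventually, one gets `(τ - τ_ρ)/ρ → (1 / h τ) ∫₀^τ g`. -/
theorem terminal_time_first_variation
    (T α c : ℝ) (hT : 0 < T)
    (h g : ℝ → ℝ)
    (hint : IntegrableOn h (Set.Icc 0 T))
    (gint : IntegrableOn g (Set.Icc 0 T))
    (τ : ℝ) (hτmem : τ ∈ Set.Ioo 0 T)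
    (hcont : ContinuousAt h τ) (hne : h τ ≠ 0)
    (hρ : ℝ → ℝ → ℝ)
    (hρint : ∀ ρ : ℝ, ρ ≠ 0 → IntegrableOn (hρ ρ) (Set.Icc 0 T))
    (hconv : TendstoUniformlyOn (fun ρ t => (hρ ρ t - h t) / ρ) g
      (nhdsWithin 0 {(0 : ℝ)}ᶜ) (Set.Icc 0 T))
    (F : ℝ → ℝ)
    (hF : ∀ s, F s = c + ∫ t in (0 : ℝ)..s, h t)
    (Fρ : ℝ → ℝ → ℝ)
    (hFρ : ∀ ρ s, Fρ ρ s = c + ∫ t in (0 : ℝ)..s, hρ ρ t)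
    (hFτ : F τ = α)
    (τρ : ℝ → ℝ)
    (hτρmem : ∀ ρ : ℝ, ρ ≠ 0 → τρ ρ ∈ Set.Icc 0 T)
    (hτρconv : Tendsto τρ (nhdsWithin 0 {(0 : ℝ)}ᶜ) (nhds τ))
    (hτρeq : ∀ᶠ ρ : ℝ in nhdsWithin 0 {(0 : ℝ)}ᶜ, Fρ ρ (τρ ρ) = α) :
    Tendsto (fun ρ : ℝ => (τ - τρ ρ) / ρ) (nhdsWithin 0 {(0 : ℝ)}ᶜ)
      (nhds ((1 / h τ) * ∫ t in (0 : ℝ)..τ, g t)) := by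
  have hpunc : ∀ᶠ ρ : ℝ in 𝓝[≠] 0, ρ ≠ 0 := eventually_mem_nhdsWithin
  have hlevel : ∀ᶠ ρ in 𝓝[≠] 0, ∫ t in (0 : ℝ)..τρ ρ, hρ ρ t = ∫ t in (0 : ℝ)..τ, h t := by
    filter_upwards [hτρeq] with ρ hα
    rw [← hFτ, hF, hFρ] at hα
    exact add_left_cancel hα
  rw [← uIcc_of_le hT.le] at hint gint hρint hconv hτρmem
  simp only [one_div_mul_eq_div, div_eq_inv_mul (_ - _)] at hconv ⊢
  exact terminal_time_first_variation_general hint.intervalIntegrable gint.intervalIntegrable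
    (Icc_subset_uIcc (Ioo_subset_Icc_self hτmem)) hcont.continuousWithinAt hne
    (hpunc.mono fun ρ hρ0 ↦ (hρint ρ hρ0).intervalIntegrable) hconv
    (tendsto_nhdsWithin_iff.2 ⟨hτρconv, hpunc.mono hτρmem⟩) hlevel
end

section
/- The function ρ ↦ (1 − (2 + ρ − √(4ρ + ρ²))/2)/ρ tends to +∞ as ρ → 0⁺ (along the filter of positive reals approaching 0). -/
open Filter

theorem sqrt_mul_add_mul_sq_div_self (a b : ℝ) {x : ℝ} (hx : 0 < x) :
    √(a * x + b * x ^ 2) / x = √(a * x⁻¹ + b) := by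
  calc √(a * x + b * x ^ 2) / x
      = √(a * x + b * x ^ 2) / √(x ^ 2) := by rw [Real.sqrt_sq hx.le]
    _ = √((a * x + b * x ^ 2) / x ^ 2) := (Real.sqrt_div' _ (sq_nonneg x)).symm
    _ = √(a * x⁻¹ + b) := by congr 1; field_simp

theorem tendsto_sqrt_mul_add_mul_sq_div_self_atTop {a : ℝ} (ha : 0 < a) (b : ℝ) :
    Tendsto (fun x : ℝ => √(a * x + b * x ^ 2) / x) (nhdsWithin 0 (Set.Ioi 0)) atTop := by
  have radicand_atTop :
      Tendsto (fun x : ℝ => a * x⁻¹ + b) (nhdsWithin 0 (Set.Ioi 0)) atTop :=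
    tendsto_atTop_add_const_right _ b (tendsto_inv_nhdsGT_zero.const_mul_atTop ha)
  refine (Real.tendsto_sqrt_atTop.comp radicand_atTop).congr' ?_
  filter_upwards [self_mem_nhdsWithin] with x hx
  exact (sqrt_mul_add_mul_sq_div_self a b hx).symm

/-- Example 3.1, Case 2: the right-hand difference quotient
`(1 − (2 + ρ − √(4ρ + ρ²))/2)/ρ` tends to `+∞` as `ρ → 0⁺`. -/
theorem example31_case2_right_limit :
    Tendsto (fun ρ : ℝ => (1 - (2 + ρ - Real.sqrt (4 * ρ + ρ ^ 2)) / 2) / ρ)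
      (nhdsWithin 0 (Set.Ioi 0)) atTop := by
  have sqrt_div_atTop :
      Tendsto (fun ρ : ℝ => √(4 * ρ + ρ ^ 2) / ρ) (nhdsWithin 0 (Set.Ioi 0)) atTop := by
    simpa only [one_mul] using tendsto_sqrt_mul_add_mul_sq_div_self_atTop four_pos 1
  have affine_atTop :
      Tendsto (fun ρ : ℝ => √(4 * ρ + ρ ^ 2) / ρ / 2 + -(1 / 2))
        (nhdsWithin 0 (Set.Ioi 0)) atTop :=
    tendsto_atTop_add_const_right _ _ (sqrt_div_atTop.atTop_div_const two_pos)
  refine affine_atTop.congr' ?_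
  filter_upwards [self_mem_nhdsWithin] with ρ hρ
  have hρ_ne : ρ ≠ 0 := ne_of_gt hρ
  field_simp
  ring
end
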